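/- arXiv:2305.18672 — 4 statements merged into one kernel-verified Lean document; each statement's English description precedes it below -/
import Mathlib

section
/- The set {log ε(n) : n ∈ 𝒯} is linearly independent over ℚ; that is, for any finite collection of distinct integers n₁, …, n_N ∈ 𝒯 and any integers k₁, …, k_N not all zero, one has k₁·log ε(n₁) + ⋯ + k_N·log ε(n_N) ≠ 0. -/
/-- `ε(n) = (n + √(n² − 4))/2`. -/
noncomputable def eps (n : ℤ) : ℝ := ((n : ℝ) + Real.sqrt ((n : ℝ) ^ 2 - 4)) / 2

/-- The set `𝒯` of integers `n ≥ 3` such that `ε(n)` is not a proper power `ε(n₀)^k`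
with `k ≥ 2`, `n₀ ≥ 3`. -/
def Tset : Set ℤ :=
  {n : ℤ | 3 ≤ n ∧ ¬ ∃ k : ℕ, 2 ≤ k ∧ ∃ n₀ : ℤ, 3 ≤ n₀ ∧ eps n = eps n₀ ^ k}

/-!
Put `δ(n) = ε(n) - ε(n)⁻¹ = √(n² - 4)`. The Galois group of a real normal number field containing
the `ε(n)` sends `ε(n)` to `ε(n)^{±1}`, the sign being the quadratic character `σ ↦ σ(δ(n)) / δ(n)`.
Conjugating a relation `∑ kᵢ log ε(nᵢ) = 0` by `σ` multiplies the `i`-th term by the `i`-th sign, so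
Dedekind's independence of characters kills every term as soon as the characters are distinct,
that is, as soon as no ratio `δ(nᵢ) / δ(nⱼ)` is rational.

If `δ(m) / δ(n)` is rational and `n < m`, then `ε(m) / ε(n)` is again some `ε(l)`, with `l < m` and
`δ(n) / δ(l)` rational. The Euclidean algorithm run on the exponents therefore writes `ε(m)` and
`ε(n)` as powers of one `ε(l)`, which for `m, n ∈ 𝒯` forces `m = n`.
-/

section QuadraticCharacter

variable {F K : Type*} [Field F] [Field K] [Algebra F K]

lemma map_eq_self_or_eq_neg_of_sq_mem_range {d : K} (hd : d ^ 2 ∈ Set.range (algebraMap F K))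
    (σ : Gal(K/F)) : σ d = d ∨ σ d = -d := by
  obtain ⟨a, ha⟩ := hd
  rw [← sq_eq_sq_iff_eq_or_eq_neg, ← map_pow, ← ha, σ.commutes]

lemma map_eq_self_or_eq_inv_of_add_inv_mem_range {u : K}
    (hu : u + u⁻¹ ∈ Set.range (algebraMap F K)) (σ : Gal(K/F)) : σ u = u ∨ σ u = u⁻¹ := by
  rcases eq_or_ne u 0 with rfl | h0
  · simp
  obtain ⟨a, ha⟩ := hu
  have htrace : σ u + (σ u)⁻¹ = u + u⁻¹ := by rw [← map_inv₀, ← map_add, ← ha, σ.commutes]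
  have hσ0 : σ u ≠ 0 := by simpa using h0
  have hroots : (σ u - u) * (σ u - u⁻¹) = 0 := by
    linear_combination σ u * htrace - mul_inv_cancel₀ hσ0 + mul_inv_cancel₀ h0
  simpa [sub_eq_zero] using hroots

lemma sub_inv_sq_mem_range {u : K} (h0 : u ≠ 0) (hu : u + u⁻¹ ∈ Set.range (algebraMap F K)) :
    (u - u⁻¹) ^ 2 ∈ Set.range (algebraMap F K) := by
  obtain ⟨a, ha⟩ := hu
  refine ⟨a ^ 2 - 4, ?_⟩
  rw [map_sub, map_pow, ha, map_ofNat]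
  linear_combination 4 * mul_inv_cancel₀ h0

/-- The character `σ ↦ σ(d) / d` by which the Galois group acts on a square root `d` of an element
of the base field. Its values are `±1`; they are kept in `K` so that the value is the literal
quotient. -/
def quadraticCharacter {d : K} (h0 : d ≠ 0) (hd : d ^ 2 ∈ Set.range (algebraMap F K)) :
    Gal(K/F) →* K where
  toFun σ := σ d / d
  map_one' := div_self h0
  map_mul' σ τ := by
    rcases map_eq_self_or_eq_neg_of_sq_mem_range hd τ with h | h <;>
      simp [h, h0, neg_div]

lemma div_mem_range_of_quadraticCharacter_eq [IsGalois F K] {d e : K} {hd0 : d ≠ 0} {he0 : e ≠ 0}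
    {hd : d ^ 2 ∈ Set.range (algebraMap F K)} {he : e ^ 2 ∈ Set.range (algebraMap F K)}
    (h : quadraticCharacter hd0 hd = quadraticCharacter he0 he) :
    d / e ∈ Set.range (algebraMap F K) := by
  refine (InfiniteGalois.mem_range_algebraMap_iff_fixed _).2 fun σ => ?_
  have hσ : σ d / d = σ e / e := DFunLike.congr_fun h σ
  have hσe : σ e ≠ 0 := by simpa using he0
  rw [map_div₀, div_eq_div_iff hσe he0]
  rw [div_eq_div_iff hd0 he0] at hσ
  rw [hσ, mul_comm]

lemma log_map_eq_quadraticCharacter_mul_log (φ : K →+* ℝ) {u : K}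
    (hu : u + u⁻¹ ∈ Set.range (algebraMap F K)) (h0 : u - u⁻¹ ≠ 0)
    (hd : (u - u⁻¹) ^ 2 ∈ Set.range (algebraMap F K)) (σ : Gal(K/F)) :
    Real.log (φ (σ u)) = φ (quadraticCharacter h0 hd σ) * Real.log (φ u) := by
  change _ = φ (σ (u - u⁻¹) / (u - u⁻¹)) * _
  rcases map_eq_self_or_eq_inv_of_add_inv_mem_range hu σ with h | h
  · rw [map_sub, map_inv₀, h, div_self h0, map_one, one_mul]
  · rw [map_sub, map_inv₀, h, inv_inv, ← neg_sub u, neg_div, div_self h0, map_neg, map_one,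
      map_inv₀, Real.log_inv, neg_one_mul]

end QuadraticCharacter

section LinearIndependence

variable {ι : Type*}

lemma sum_mul_log_map {K : Type*} [Field K] (φ : K →+* ℝ) (s : Finset ι) (k : ι → ℤ) {u : ι → K}
    (hu : ∀ i ∈ s, u i ≠ 0) :
    ∑ i ∈ s, (k i : ℝ) * Real.log (φ (u i)) = Real.log (φ (∏ i ∈ s, u i ^ k i)) := by
  rw [map_prod, Real.log_prod fun i hi => (map_ne_zero φ).2 (zpow_ne_zero _ (hu i hi))]
  simp only [map_zpow₀, Real.log_zpow]

lemma log_map_eq_zero_iff {K : Type*} [Field K] (φ : K →+* ℝ) {x : K} :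
    Real.log (φ x) = 0 ↔ x = 0 ∨ x = 1 ∨ x = -1 := by
  rw [Real.log_eq_zero, map_eq_zero, map_eq_one_iff φ φ.injective, ← map_one φ, ← map_neg,
    φ.injective.eq_iff]

lemma linearIndependent_log_map_of_add_inv_mem_range {F K : Type*} [Field F] [Field K]
    [Algebra F K] [IsGalois F K] (φ : K →+* ℝ) {u : ι → K}
    (hlog : ∀ i, Real.log (φ (u i)) ≠ 0) (hadd : ∀ i, u i + (u i)⁻¹ ∈ Set.range (algebraMap F K))
    (hratio : Pairwise fun i j =>
      (u i - (u i)⁻¹) / (u j - (u j)⁻¹) ∉ Set.range (algebraMap F K)) :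
    LinearIndependent ℤ fun i => Real.log (φ (u i)) := by
  have hu0 (i) : u i ≠ 0 := fun h => hlog i ((log_map_eq_zero_iff φ).2 (.inl h))
  have hd0 (i) : u i - (u i)⁻¹ ≠ 0 := fun h => hlog i <| (log_map_eq_zero_iff φ).2 <| by
    rw [sub_eq_zero, eq_comm, inv_eq_self₀] at h
    tauto
  have hd (i) := sub_inv_sq_mem_range (hu0 i) (hadd i)
  let χ (i : ι) : Gal(K/F) →* ℝ := φ.toMonoidHom.comp (quadraticCharacter (hd0 i) (hd i))
  have hχ : Function.Injective χ := fun i j hij => by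
    refine hratio.eq fun h => h (div_mem_range_of_quadraticCharacter_eq (hd0 := hd0 i)
      (he0 := hd0 j) (hd := hd i) (he := hd j) ?_)
    exact MonoidHom.ext fun σ => φ.injective (DFunLike.congr_fun hij σ)
  refine linearIndependent_iff'.2 fun s k hk i hi => ?_
  simp only [zsmul_eq_mul] at hk
  have hconj (σ : Gal(K/F)) : ∑ i ∈ s, (k i : ℝ) * Real.log (φ (σ (u i))) = 0 := by
    rw [sum_mul_log_map φ s k fun i _ => hu0 i, log_map_eq_zero_iff] at hk
    exact (sum_mul_log_map (φ.comp (σ : K →+* K)) s k fun i _ => hu0 i).trans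
      ((log_map_eq_zero_iff _).2 hk)
  have hrel : ∑ i ∈ s, (k i * Real.log (φ (u i))) • ⇑(χ i) = 0 := by
    ext σ
    rw [Finset.sum_apply, Pi.zero_apply, ← hconj σ]
    refine Finset.sum_congr rfl fun i _ => ?_
    have hχσ : χ i σ = φ (quadraticCharacter (hd0 i) (hd i) σ) := rfl
    rw [log_map_eq_quadraticCharacter_mul_log φ (hadd i) (hd0 i) (hd i), Pi.smul_apply,
      smul_eq_mul, hχσ]
    ring
  have hχ_indep := (linearIndependent_monoidHom Gal(K/F) ℝ).comp χ hχ
  simpa [hlog i] using linearIndependent_iff'.1 hχ_indep s _ hrel i hi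

end LinearIndependence

section Adjoin

open IntermediateField Polynomial

variable {F E : Type*} [Field F] [Field E] [Algebra F E]

lemma normal_adjoin_of_splits {S : Set E} (hS : ∀ x ∈ S, IsIntegral F x ∧
    ((minpoly F x).map (algebraMap F (adjoin F S))).Splits) : Normal F (adjoin F S) := by
  refine normal_iff.2 fun x => ⟨?_, ?_⟩
  · have := isAlgebraic_adjoin fun x hx => (hS x hx).1
    exact Algebra.IsIntegral.isIntegral x
  · rw [minpoly_eq]
    exact splits_of_mem_adjoin F E hS x.2

lemma normal_adjoin_of_add_inv_mem_range {S : Set E} (h0 : ∀ x ∈ S, x ≠ 0)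
    (hS : ∀ x ∈ S, x + x⁻¹ ∈ Set.range (algebraMap F E)) : Normal F (adjoin F S) := by
  refine normal_adjoin_of_splits fun x hx => ?_
  obtain ⟨a, ha⟩ := hS x hx
  let y : adjoin F S := ⟨x, subset_adjoin F S hx⟩
  have hy0 : y ≠ 0 := fun h => h0 x hx (congrArg Subtype.val h)
  have hay : algebraMap F (adjoin F S) a = y + y⁻¹ := Subtype.ext ha
  have hroot : aeval x (X ^ 2 - C a * X + 1 : F[X]) = 0 := by
    simp only [map_add, map_sub, map_mul, map_pow, aeval_X, aeval_C, map_one, ha]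
    linear_combination -mul_inv_cancel₀ (h0 x hx)
  have hmonic : (X ^ 2 - C a * X + 1 : F[X]).Monic := by monicity!
  have hfactor : (X ^ 2 - C a * X + 1 : F[X]).map (algebraMap F (adjoin F S)) =
      (X - C y) * (X - C y⁻¹) := by
    have hC : C y * C y⁻¹ = 1 := by rw [← C_mul, mul_inv_cancel₀ hy0, C_1]
    simp only [Polynomial.map_add, Polynomial.map_sub, Polynomial.map_mul, Polynomial.map_pow,
      map_X, map_C, Polynomial.map_one, hay, C_add]
    linear_combination -hC
  refine ⟨⟨_, hmonic, hroot⟩, ?_⟩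
  refine Splits.of_dvd ?_ (hmonic.map _).ne_zero (Polynomial.map_dvd _ (minpoly.dvd F x hroot))
  rw [hfactor]
  exact (Splits.X_sub_C _).mul (Splits.X_sub_C _)

lemma linearIndependent_log_of_add_inv_mem_range {ι F : Type*} [Field F] [Algebra F ℝ] {u : ι → ℝ}
    (hlog : ∀ i, Real.log (u i) ≠ 0) (hadd : ∀ i, u i + (u i)⁻¹ ∈ Set.range (algebraMap F ℝ))
    (hratio : Pairwise fun i j =>
      (u i - (u i)⁻¹) / (u j - (u j)⁻¹) ∉ Set.range (algebraMap F ℝ)) :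
    LinearIndependent ℤ fun i => Real.log (u i) := by
  have : CharZero F := (algebraMap F ℝ).charZero
  let K := adjoin F (Set.range u)
  have : Normal F K := normal_adjoin_of_add_inv_mem_range
    (Set.forall_mem_range.2 fun i h => hlog i (by simp [h])) (Set.forall_mem_range.2 hadd)
  have : IsGalois F K := ⟨⟩
  let v (i : ι) : K := ⟨u i, subset_adjoin F _ ⟨i, rfl⟩⟩
  refine linearIndependent_log_map_of_add_inv_mem_range (F := F) (algebraMap K ℝ) (u := v) hlog
    (fun i => ?_) fun i j hij => ?_
  · obtain ⟨a, ha⟩ := hadd i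
    exact ⟨a, Subtype.ext ha⟩
  · rintro ⟨a, ha⟩
    exact hratio hij ⟨a, congrArg Subtype.val ha⟩

end Adjoin

lemma sq_sub_four_nonneg {n : ℤ} (hn : 2 ≤ n) : (0 : ℝ) ≤ (n : ℝ) ^ 2 - 4 := by
  have : (2 : ℝ) ≤ n := by exact_mod_cast hn
  nlinarith

lemma inv_eps {n : ℤ} (hn : 2 ≤ n) : (eps n)⁻¹ = (n - √((n : ℝ) ^ 2 - 4)) / 2 := by
  refine inv_eq_of_mul_eq_one_right ?_
  rw [eps]
  linear_combination -Real.sq_sqrt (sq_sub_four_nonneg hn) / 4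

lemma eps_add_inv {n : ℤ} (hn : 2 ≤ n) : eps n + (eps n)⁻¹ = n := by
  rw [inv_eps hn, eps]
  ring

lemma eps_sub_inv {n : ℤ} (hn : 2 ≤ n) : eps n - (eps n)⁻¹ = √((n : ℝ) ^ 2 - 4) := by
  rw [inv_eps hn, eps]
  ring

lemma eps_sub_inv_sq {n : ℤ} (hn : 2 ≤ n) : (eps n - (eps n)⁻¹) ^ 2 = (n : ℝ) ^ 2 - 4 := by
  rw [eps_sub_inv hn, Real.sq_sqrt (sq_sub_four_nonneg hn)]

lemma eps_strictMonoOn : StrictMonoOn eps (Set.Ici 2) := by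
  intro l hl m _ hlm
  have hl' : (2 : ℝ) ≤ l := by exact_mod_cast hl
  have hlm' : (l : ℝ) < m := by exact_mod_cast hlm
  have : √((l : ℝ) ^ 2 - 4) ≤ √((m : ℝ) ^ 2 - 4) := Real.sqrt_le_sqrt (by gcongr)
  unfold eps
  linarith

lemma one_lt_eps {n : ℤ} (hn : 3 ≤ n) : 1 < eps n := by
  have : (3 : ℝ) ≤ n := by exact_mod_cast hn
  have := Real.sqrt_nonneg ((n : ℝ) ^ 2 - 4)
  unfold eps
  linarith

lemma three_le_of_add_inv_eq {u : ℝ} (hu : 1 < u) {n : ℤ} (h : u + u⁻¹ = n) : 3 ≤ n := by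
  have hinv : u * u⁻¹ = 1 := mul_inv_cancel₀ (by positivity)
  have hinv_lt : u⁻¹ < 1 := inv_lt_one_of_one_lt₀ hu
  have : (2 : ℝ) < n := by rw [← h]; nlinarith
  exact_mod_cast this

lemma eq_eps_of_add_inv_eq {u : ℝ} (hu : 1 ≤ u) {n : ℤ} (h : u + u⁻¹ = n) : u = eps n := by
  have hinv : u * u⁻¹ = 1 := mul_inv_cancel₀ (by positivity)
  have hinv_le : u⁻¹ ≤ u := (inv_le_one_of_one_le₀ hu).trans hu
  have hsq : (n : ℝ) ^ 2 - 4 = (u - u⁻¹) ^ 2 := by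
    rw [← h]
    linear_combination 4 * hinv
  rw [eps, hsq, Real.sqrt_sq (sub_nonneg.2 hinv_le), ← h]
  ring

lemma isSquare_of_eps_sub_inv_div_mem_range {m n : ℤ} (hm : 2 ≤ m) (hn : 3 ≤ n)
    (h : (eps m - (eps m)⁻¹) / (eps n - (eps n)⁻¹) ∈ Set.range (algebraMap ℚ ℝ)) :
    IsSquare ((m ^ 2 - 4) * (n ^ 2 - 4)) := by
  obtain ⟨q, hq⟩ := h
  have hpos : 0 < eps n - (eps n)⁻¹ :=
    sub_pos.2 <| (inv_lt_one_of_one_lt₀ (one_lt_eps hn)).trans (one_lt_eps hn)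
  rw [eq_ratCast, eq_div_iff hpos.ne'] at hq
  rw [← Rat.isSquare_intCast_iff]
  refine ⟨q * (n ^ 2 - 4), ?_⟩
  have : (((m : ℝ) ^ 2 - 4) * (n ^ 2 - 4)) = q * (n ^ 2 - 4) * (q * (n ^ 2 - 4)) := by
    rw [← eps_sub_inv_sq hm, ← hq, ← eps_sub_inv_sq (by lia : 2 ≤ n)]
    ring
  exact_mod_cast this

lemma even_mul_sub_of_sq_eq {m n r : ℤ} (h : r ^ 2 = (m ^ 2 - 4) * (n ^ 2 - 4)) :
    Even (m * n - r) := by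
  have : Even ((m * n) ^ 2 - r ^ 2) := ⟨2 * (m ^ 2 + n ^ 2 - 4), by rw [h]; ring⟩
  simpa [Int.even_sub, Int.even_pow] using this

lemma eps_div_add_inv {m n : ℤ} (hm : 2 ≤ m) (hn : 2 ≤ n) :
    eps m / eps n + (eps m / eps n)⁻¹ =
      (m * n - √(((m : ℝ) ^ 2 - 4) * ((n : ℝ) ^ 2 - 4))) / 2 := by
  rw [Real.sqrt_mul (sq_sub_four_nonneg hm), ← eps_sub_inv hm, ← eps_sub_inv hn,
    ← eps_add_inv hm, ← eps_add_inv hn, inv_div, div_eq_mul_inv, div_eq_mul_inv]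
  ring

lemma exists_int_eps_div_add_inv_eq {m n : ℤ} (hm : 2 ≤ m) (hn : 2 ≤ n)
    (h : IsSquare ((m ^ 2 - 4) * (n ^ 2 - 4))) :
    ∃ l : ℤ, eps m / eps n + (eps m / eps n)⁻¹ = l ∧ IsSquare ((l ^ 2 - 4) * (n ^ 2 - 4)) := by
  obtain ⟨r, hr0, hr⟩ : ∃ r : ℤ, 0 ≤ r ∧ r ^ 2 = (m ^ 2 - 4) * (n ^ 2 - 4) := by
    obtain ⟨r, hr⟩ := h
    exact ⟨|r|, abs_nonneg r, by rw [sq_abs, hr, sq]⟩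
  obtain ⟨l, hl⟩ := even_mul_sub_of_sq_eq hr
  refine ⟨l, ?_, n * l - 2 * m, ?_⟩
  · have hr' : ((m : ℝ) ^ 2 - 4) * ((n : ℝ) ^ 2 - 4) = (r : ℝ) ^ 2 := by exact_mod_cast hr.symm
    have hl' : (m : ℝ) * n - r = l + l := by exact_mod_cast hl
    rw [eps_div_add_inv hm hn, hr', Real.sqrt_sq (by exact_mod_cast hr0), hl', add_self_div_two]
  · obtain rfl : r = m * n - 2 * l := by lia
    linear_combination -hr

lemma exists_eps_eq_mul_eps {m n : ℤ} (hn : 3 ≤ n) (hnm : n < m)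
    (h : IsSquare ((m ^ 2 - 4) * (n ^ 2 - 4))) :
    ∃ l : ℤ, 3 ≤ l ∧ l < m ∧ IsSquare ((l ^ 2 - 4) * (n ^ 2 - 4)) ∧ eps m = eps l * eps n := by
  have hm2 : m ∈ Set.Ici 2 := Set.mem_Ici.2 (by lia)
  have hn2 : n ∈ Set.Ici 2 := Set.mem_Ici.2 (by lia)
  have hn1 := one_lt_eps hn
  have hn0 : 0 < eps n := zero_lt_one.trans hn1
  obtain ⟨l, hl, hsq⟩ := exists_int_eps_div_add_inv_eq hm2 hn2 h
  have hquot : 1 < eps m / eps n := (one_lt_div hn0).2 (eps_strictMonoOn hn2 hm2 hnm)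
  have hl3 : 3 ≤ l := three_le_of_add_inv_eq hquot hl
  have heps : eps m / eps n = eps l := eq_eps_of_add_inv_eq hquot.le hl
  have hlt : eps l < eps m := heps ▸ div_lt_self (by linarith [(one_lt_div hn0).1 hquot]) hn1
  exact ⟨l, hl3, (eps_strictMonoOn.lt_iff_lt (Set.mem_Ici.2 (by lia)) hm2).1 hlt, hsq,
    (div_eq_iff hn0.ne').1 heps⟩

lemma exists_eps_eq_pow_eps {m n : ℤ} (hm : 3 ≤ m) (hn : 3 ≤ n)
    (h : IsSquare ((m ^ 2 - 4) * (n ^ 2 - 4))) :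
    ∃ l : ℤ, 3 ≤ l ∧ ∃ a b : ℕ, 1 ≤ a ∧ 1 ≤ b ∧ eps m = eps l ^ a ∧ eps n = eps l ^ b := by
  induction hN : (m + n).toNat using Nat.strong_induction_on generalizing m n with
  | _ N ih =>
    wlog hnm : n ≤ m generalizing m n
    · obtain ⟨l, hl, a, b, ha, hb, hea, heb⟩ :=
        this hn hm (by rwa [mul_comm]) (by rwa [add_comm]) (by lia)
      exact ⟨l, hl, b, a, hb, ha, heb, hea⟩
    rcases hnm.eq_or_lt with rfl | hnm
    · exact ⟨n, hn, 1, 1, le_rfl, le_rfl, (pow_one _).symm, (pow_one _).symm⟩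
    obtain ⟨m', hm', hlt, hsq, hmul⟩ := exists_eps_eq_mul_eps hn hnm h
    obtain ⟨l, hl, a, b, ha, hb, hea, heb⟩ := ih (m' + n).toNat (by lia) hm' hn hsq rfl
    exact ⟨l, hl, a + b, b, by lia, hb, by rw [hmul, hea, heb, pow_add], heb⟩

lemma eq_of_mem_Tset_of_isSquare {m n : ℤ} (hm : m ∈ Tset) (hn : n ∈ Tset)
    (h : IsSquare ((m ^ 2 - 4) * (n ^ 2 - 4))) : m = n := by
  obtain ⟨hm3, hm⟩ := hm
  obtain ⟨hn3, hn⟩ := hn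
  obtain ⟨l, hl, a, b, ha, hb, hma, hnb⟩ := exists_eps_eq_pow_eps hm3 hn3 h
  obtain rfl : a = 1 := by
    by_contra ha1
    exact hm ⟨a, by lia, l, hl, hma⟩
  obtain rfl : b = 1 := by
    by_contra hb1
    exact hn ⟨b, by lia, l, hl, hnb⟩
  exact eps_strictMonoOn.injOn (Set.mem_Ici.2 (by lia)) (Set.mem_Ici.2 (by lia))
    (hma.trans hnb.symm)

/-- The set `{log ε(n) : n ∈ 𝒯}` is linearly independent over `ℚ`. -/
theorem log_eps_linearIndependent
    (N : ℕ) (n : Fin N → ℤ) (hn : ∀ i, n i ∈ Tset) (hinj : Function.Injective n)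
    (k : Fin N → ℤ) (hk : ∃ i, k i ≠ 0) :
    ∑ i, (k i : ℝ) * Real.log (eps (n i)) ≠ 0 := by
  have hn3 (i) : 3 ≤ n i := (hn i).1
  have hn2 (i) : 2 ≤ n i := by linarith [hn3 i]
  have hlog (i) : Real.log (eps (n i)) ≠ 0 := (Real.log_pos (one_lt_eps (hn3 i))).ne'
  have hadd (i) : eps (n i) + (eps (n i))⁻¹ ∈ Set.range (algebraMap ℚ ℝ) :=
    ⟨n i, by rw [eps_add_inv (hn2 i), map_intCast]⟩
  have hratio : Pairwise fun i j => (eps (n i) - (eps (n i))⁻¹) / (eps (n j) - (eps (n j))⁻¹) ∉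
      Set.range (algebraMap ℚ ℝ) := fun i j hij h =>
    hinj.ne hij <| eq_of_mem_Tset_of_isSquare (hn i) (hn j) <|
      isSquare_of_eps_sub_inv_div_mem_range (hn2 i) (hn3 j) h
  have hindep := linearIndependent_log_of_add_inv_mem_range hlog hadd hratio
  intro hsum
  obtain ⟨i, hi⟩ := hk
  exact hi (Fintype.linearIndependent_iff.1 hindep k (by simpa using hsum) i)
end

section
/- Let N ≥ 2 be an integer and let Γ̄(N) be the set of matrices γ ∈ SL₂(ℤ) with γ ≡ I (mod N) or γ ≡ −I (mod N), where I is the identity matrix. Then {tr γ : γ ∈ Γ̄(N), tr γ > 2} = {n ∈ ℤ : n ≥ 3 and (n ≡ 2 (mod N²) or n ≡ −2 (mod N²))}. -/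
/-! For a `2 × 2` matrix `A` of determinant `1` and a scalar `ε` with `ε ^ 2 = 1`, one has
`det (A - ε) = 2 - ε * tr A = -ε * (tr A - 2 * ε)`. If `A ≡ ε (mod q)`, then every entry of `A - ε`
is divisible by `q`, so its determinant is divisible by `q ^ 2`, and hence so is `tr A - 2 * ε`.
Conversely, `!![ε + q ^ 2 * k, ε * (q * k); q, ε]` has determinant `1` and realizes the trace
`2 * ε + q ^ 2 * k`. The theorem is the union of the cases `ε = 1` and `ε = -1`. -/

section

open Matrix

variable {R : Type*} [CommRing R]

theorem pow_card_dvd_det_of_forall_dvd {n : Type*} [Fintype n] [DecidableEq n] {q : R}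
    {A : Matrix n n R} (hA : ∀ i j, q ∣ A i j) : q ^ Fintype.card n ∣ A.det := by
  choose B hB using hA
  have hAB : A = q • of B := by
    ext i j
    exact hB i j
  rw [hAB, det_smul]
  exact dvd_mul_right _ _

theorem det_sub_smul_one_fin_two (A : Matrix (Fin 2) (Fin 2) R) (r : R) :
    (A - r • 1).det = A.det - r * A.trace + r ^ 2 := by
  simp only [det_fin_two, trace_fin_two, Matrix.sub_apply, Matrix.smul_apply, one_apply_eq,
    one_apply_ne zero_ne_one, one_apply_ne one_ne_zero, smul_eq_mul]
  ring

theorem sq_dvd_trace_sub_two_mul {q ε : R} (hε : ε ^ 2 = 1) {A : Matrix (Fin 2) (Fin 2) R}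
    (hdet : A.det = 1) (hA : ∀ i j, q ∣ A i j - (ε • 1 : Matrix (Fin 2) (Fin 2) R) i j) :
    q ^ 2 ∣ A.trace - 2 * ε := by
  have hdvd : q ^ 2 ∣ (A - ε • 1).det := pow_card_dvd_det_of_forall_dvd hA
  have htrace : A.trace - 2 * ε = -ε * (A - ε • 1).det := by
    rw [det_sub_smul_one_fin_two, hdet]
    linear_combination (ε - A.trace) * hε
  rw [htrace]
  exact hdvd.mul_left _

theorem exists_trace_eq_of_sq_dvd_sub_two_mul {q ε t : R} (hε : ε ^ 2 = 1)
    (ht : q ^ 2 ∣ t - 2 * ε) :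
    ∃ γ : SpecialLinearGroup (Fin 2) R,
      (∀ i j, q ∣ γ.1 i j - (ε • 1 : Matrix (Fin 2) (Fin 2) R) i j) ∧ trace γ.1 = t := by
  obtain ⟨k, hk⟩ := ht
  refine ⟨⟨!![ε + q ^ 2 * k, ε * (q * k); q, ε], ?det⟩, ?congr, ?trace⟩
  case det =>
    rw [det_fin_two_of]
    linear_combination hε
  case congr =>
    have hq : q ∣ q ^ 2 * k := (dvd_pow_self q two_ne_zero).mul_right k
    have hqk : q ∣ ε * (q * k) := (dvd_mul_right q k).mul_left ε
    simp [Fin.forall_fin_two, hq, hqk]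
  case trace =>
    rw [trace_fin_two_of]
    linear_combination -hk

theorem exists_congr_smul_one_and_trace_eq_iff {q ε t : R} (hε : ε ^ 2 = 1) :
    (∃ γ : SpecialLinearGroup (Fin 2) R,
      (∀ i j, q ∣ γ.1 i j - (ε • 1 : Matrix (Fin 2) (Fin 2) R) i j) ∧ trace γ.1 = t) ↔
      q ^ 2 ∣ t - 2 * ε := by
  refine ⟨?_, exists_trace_eq_of_sq_dvd_sub_two_mul hε⟩
  rintro ⟨γ, hγ, rfl⟩
  exact sq_dvd_trace_sub_two_mul hε γ.2 hγ

theorem trace_set_principal_congruence_general (q : R) :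
    {t : R | ∃ γ : SpecialLinearGroup (Fin 2) R,
        ((∀ i j, q ∣ (γ.1 i j - (1 : Matrix (Fin 2) (Fin 2) R) i j)) ∨
          (∀ i j, q ∣ (γ.1 i j - (-1 : Matrix (Fin 2) (Fin 2) R) i j))) ∧
        trace γ.1 = t}
      = {t : R | q ^ 2 ∣ t - 2 ∨ q ^ 2 ∣ t - -2} := by
  ext t
  have hpos := exists_congr_smul_one_and_trace_eq_iff (q := q) (t := t) (one_pow 2)
  have hneg := exists_congr_smul_one_and_trace_eq_iff (q := q) (t := t) neg_one_sq
  rw [one_smul, mul_one] at hpos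
  rw [neg_one_smul, mul_neg_one] at hneg
  simp only [Set.mem_ofPred_eq, or_and_right, exists_or, hpos, hneg]

end

/-- The trace set of the principal congruence subgroup `Γ̄(N)` (together with its
negatives) equals `{n ≥ 3 : n ≡ ±2 mod N²}`. -/
theorem trace_set_principal_congruence (N : ℕ) (hN : 2 ≤ N) :
    {n : ℤ | ∃ γ : Matrix.SpecialLinearGroup (Fin 2) ℤ,
        ((∀ i j, (N : ℤ) ∣ (γ.1 i j - (1 : Matrix (Fin 2) (Fin 2) ℤ) i j)) ∨
          (∀ i j, (N : ℤ) ∣ (γ.1 i j - (-1 : Matrix (Fin 2) (Fin 2) ℤ) i j))) ∧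
        Matrix.trace γ.1 = n ∧ 2 < n}
      = {n : ℤ | 3 ≤ n ∧ (n ≡ 2 [ZMOD ((N : ℤ) ^ 2)] ∨ n ≡ -2 [ZMOD ((N : ℤ) ^ 2)])} := by
  ext n
  have hmod (m : ℤ) : n ≡ m [ZMOD (N : ℤ) ^ 2] ↔ (N : ℤ) ^ 2 ∣ n - m :=
    Int.modEq_comm.trans Int.modEq_iff_dvd
  have hgen := Set.ext_iff.1 (trace_set_principal_congruence_general (N : ℤ)) n
  simp only [Set.mem_ofPred_eq] at hgen
  simp only [Set.mem_ofPred_eq, hmod, ← and_assoc, exists_and_right, hgen]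
  exact and_comm.trans (and_congr_left' Int.lt_iff_add_one_le)
end

section
/- Let p be a prime and let Γ̄₁(p²) be the set of matrices γ ∈ SL₂(ℤ) such that γ or −γ is congruent modulo p² to an upper triangular unipotent matrix [[1, b],[0, 1]] for some integer b. Then {tr γ : γ ∈ Γ̄₁(p²), tr γ > 2} = {n ∈ ℤ : n ≥ 3 and (n ≡ 2 (mod p²) or n ≡ −2 (mod p²))}. -/
/-!
If `γ ≡ ±[[1, b], [0, 1]]` modulo an ideal, then adding the diagonal entries gives `tr γ ≡ ±2`.
Conversely, `[[1 + d, 1], [d, 1]]` has determinant `1` and trace `2 + d`, and it reduces to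
`[[1, 1], [0, 1]]` modulo every ideal containing `d`; its negative takes care of the traces
congruent to `-2`.
-/

section CommRing

variable {R : Type*} [CommRing R] {I : Ideal R} {A : Matrix (Fin 2) (Fin 2) R}

/-- Congruence of a `2 × 2` matrix, entrywise modulo an ideal, to some upper triangular unipotent
matrix. The elements of `Γ̄₁(N)` are the `γ` for which this holds of `γ` or `-γ` modulo `(N)`. -/
def IsUpperUnipotentMod (I : Ideal R) (A : Matrix (Fin 2) (Fin 2) R) : Prop :=
  ∃ b : R, ∀ i j, A i j - !![1, b; 0, 1] i j ∈ I

theorem isUpperUnipotentMod_iff :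
    IsUpperUnipotentMod I A ↔ A 0 0 - 1 ∈ I ∧ A 1 0 ∈ I ∧ A 1 1 - 1 ∈ I := by
  constructor
  · rintro ⟨b, hb⟩
    exact ⟨hb 0 0, by simpa using hb 1 0, hb 1 1⟩
  · rintro ⟨h00, h10, h11⟩
    exact ⟨A 0 1, by simp [Fin.forall_fin_two, h00, h10, h11]⟩

theorem IsUpperUnipotentMod.trace_sub_two_mem (hA : IsUpperUnipotentMod I A) :
    A.trace - 2 ∈ I := by
  obtain ⟨h00, -, h11⟩ := isUpperUnipotentMod_iff.1 hA
  have trace_sub_two : A.trace - 2 = (A 0 0 - 1) + (A 1 1 - 1) := by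
    rw [Matrix.trace_fin_two]
    ring
  exact trace_sub_two ▸ I.add_mem h00 h11

theorem IsUpperUnipotentMod.trace_add_two_mem_of_neg (hA : IsUpperUnipotentMod I (-A)) :
    A.trace + 2 ∈ I := by
  rw [← I.neg_mem_iff, neg_add', ← Matrix.trace_neg]
  exact hA.trace_sub_two_mem

theorem exists_isUpperUnipotentMod_trace_eq {t : R} (ht : t - 2 ∈ I) :
    ∃ γ : Matrix.SpecialLinearGroup (Fin 2) R,
      IsUpperUnipotentMod I γ.1 ∧ γ.1.trace = t := by
  refine ⟨⟨!![1 + (t - 2), 1; t - 2, 1], by rw [Matrix.det_fin_two_of]; ring⟩, ?_, ?_⟩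
  · simpa [isUpperUnipotentMod_iff] using ht
  · rw [Matrix.trace_fin_two_of]
    ring

theorem exists_isUpperUnipotentMod_neg_trace_eq {t : R} (ht : t + 2 ∈ I) :
    ∃ γ : Matrix.SpecialLinearGroup (Fin 2) R,
      IsUpperUnipotentMod I (-γ.1) ∧ γ.1.trace = t := by
  have neg_sub_two_mem : -t - 2 ∈ I := by rwa [← neg_add', I.neg_mem_iff]
  obtain ⟨γ, hγ, trace_γ⟩ := exists_isUpperUnipotentMod_trace_eq neg_sub_two_mem
  refine ⟨-γ, ?_, ?_⟩
  · rwa [Matrix.SpecialLinearGroup.coe_neg, neg_neg]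
  · rw [Matrix.SpecialLinearGroup.coe_neg, Matrix.trace_neg, trace_γ, neg_neg]

theorem trace_set_gamma1_general (I : Ideal R) :
    {t : R | ∃ γ : Matrix.SpecialLinearGroup (Fin 2) R,
        (IsUpperUnipotentMod I γ.1 ∨ IsUpperUnipotentMod I (-γ.1)) ∧ γ.1.trace = t}
      = {t : R | t - 2 ∈ I ∨ t + 2 ∈ I} := by
  ext t
  constructor
  · rintro ⟨γ, hγ | hγ, rfl⟩
    · exact Or.inl hγ.trace_sub_two_mem
    · exact Or.inr hγ.trace_add_two_mem_of_neg
  · rintro (ht | ht)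
    · obtain ⟨γ, hγ, trace_γ⟩ := exists_isUpperUnipotentMod_trace_eq ht
      exact ⟨γ, Or.inl hγ, trace_γ⟩
    · obtain ⟨γ, hγ, trace_γ⟩ := exists_isUpperUnipotentMod_neg_trace_eq ht
      exact ⟨γ, Or.inr hγ, trace_γ⟩

end CommRing

theorem int_modEq_iff_sub_mem_span {a b N : ℤ} :
    a ≡ b [ZMOD N] ↔ a - b ∈ Ideal.span {N} := by
  rw [Int.modEq_comm, Int.modEq_iff_dvd, Ideal.mem_span_singleton]

/-- The trace set of `Γ̄₁(p²)` (matrices `γ` with `γ` or `−γ` congruent mod `p²`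
to an upper triangular unipotent matrix) equals `{n ≥ 3 : n ≡ ±2 mod p²}`. -/
theorem trace_set_gamma1 (p : ℕ) (hp : p.Prime) :
    {n : ℤ | ∃ γ : Matrix.SpecialLinearGroup (Fin 2) ℤ,
        ((∃ b : ℤ, ∀ i j, ((p : ℤ) ^ 2) ∣ (γ.1 i j - !![(1 : ℤ), b; 0, 1] i j)) ∨
          (∃ b : ℤ, ∀ i j, ((p : ℤ) ^ 2) ∣ ((-γ.1) i j - !![(1 : ℤ), b; 0, 1] i j))) ∧
        Matrix.trace γ.1 = n ∧ 2 < n}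
      = {n : ℤ | 3 ≤ n ∧ (n ≡ 2 [ZMOD ((p : ℤ) ^ 2)] ∨ n ≡ -2 [ZMOD ((p : ℤ) ^ 2)])} := by
  ext n
  have trace_iff := Set.ext_iff.1 (trace_set_gamma1_general (Ideal.span {(p : ℤ) ^ 2})) n
  simp only [Set.mem_ofPred_eq, IsUpperUnipotentMod, Ideal.mem_span_singleton] at trace_iff
  simp only [Set.mem_ofPred_eq, ← and_assoc, exists_and_right, int_modEq_iff_sub_mem_span,
    Ideal.mem_span_singleton, sub_neg_eq_add, trace_iff]
  exact and_comm
end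

section
/- For every η > 0 there exists a constant C > 0 such that for every integer n ≥ 3, the set of conjugacy classes of the group SL₂(ℤ) whose elements have trace n is finite, and its cardinality is at most C·n^{1+η}. -/
/-!
Every conjugacy class of `SL₂(ℤ)` whose trace `n` satisfies `n² ≠ 4` contains a matrix
`!![a, b; c, d]` with `|d - a| ≤ |c| ≤ |b|`: choose a representative with `|c|` minimal, conjugate
by a power of `T` to reduce `d - a` modulo `2c`, and conjugate by `S` to compare `c` with `b`. Write
`t = d - a` and `D = n² - 4`. Then `t² + 4bc = D` and the inequalities force `t² ≤ |D|`, so there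
are `O(|D|^(1/2))` choices of `t`, and each leaves at most `O(|D|^ε)` factorizations of
`(D - t²) / 4` as `b * c`, by the divisor bound.
-/

open Finset ModularGroup
open scoped MatrixGroups

section DivisorBound

theorem add_one_le_mul_pow {R : Type*} [CommRing R] [LinearOrder R] [IsStrictOrderedRing R]
    {K x : R} (hK : 1 ≤ K) (hx : 1 ≤ K * (x - 1)) (k : ℕ) : (k : R) + 1 ≤ K * x ^ k := by
  have hx₁ : 0 < x - 1 := pos_of_mul_pos_right (by linarith) (by linarith : 0 ≤ K)
  calc (k : R) + 1 ≤ k * (K * (x - 1)) + K := by gcongr; exact le_mul_of_one_le_right (by simp) hx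
    _ = K * (1 + k * (x - 1)) := by ring
    _ ≤ K * x ^ k := by gcongr; exact one_add_mul_sub_le_pow (by linarith) k

theorem rpow_eq_prod_primeFactors {m : ℕ} (hm : m ≠ 0) (ε : ℝ) :
    (m : ℝ) ^ ε = ∏ p ∈ m.primeFactors, ((p : ℝ) ^ ε) ^ m.factorization p := by
  conv_lhs => rw [← Nat.prod_factorization_pow_eq_self hm, Finsupp.prod, Nat.cast_prod,
    ← Real.finsetProd_rpow _ _ fun _ _ ↦ by positivity, Nat.support_factorization]
  refine prod_congr rfl fun p _ ↦ ?_
  rw [Nat.cast_pow, Real.rpow_pow_comm p.cast_nonneg]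

theorem card_divisors_le_prod_mul_rpow {ε : ℝ} {K : ℕ → ℝ} (hK : ∀ p, p.Prime → 1 ≤ K p)
    (hKε : ∀ p, p.Prime → 1 ≤ K p * ((p : ℝ) ^ ε - 1)) {m : ℕ} (hm : m ≠ 0) :
    (#m.divisors : ℝ) ≤ (∏ p ∈ m.primeFactors, K p) * (m : ℝ) ^ ε := by
  rw [Nat.card_divisors hm, rpow_eq_prod_primeFactors hm, ← prod_mul_distrib]
  push_cast
  refine prod_le_prod (fun _ _ ↦ by positivity) fun p hp ↦ ?_
  have hp := Nat.prime_of_mem_primeFactors hp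
  exact add_one_le_mul_pow (hK p hp) (hKε p hp) _

theorem prod_ite_lt_le_pow {R : Type*} [CommSemiring R] [PartialOrder R] [IsOrderedRing R] {K : R}
    (hK : 1 ≤ K) (P : ℕ) (s : Finset ℕ) :
    ∏ p ∈ s, (if p < P then K else 1) ≤ K ^ P := by
  rw [← prod_filter, prod_const]
  refine pow_le_pow_right₀ hK ?_
  calc #{p ∈ s | p < P} ≤ #(range P) := card_le_card fun p hp ↦ by simp_all
    _ = P := card_range P

theorem exists_card_divisors_le_mul_rpow {ε : ℝ} (hε : 0 < ε) :
    ∃ C > 0, ∀ m : ℕ, (#m.divisors : ℝ) ≤ C * (m : ℝ) ^ ε := by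
  obtain ⟨P, hP⟩ := exists_nat_ge ((2 : ℝ) ^ ε⁻¹)
  have h_two : 0 < (2 : ℝ) ^ ε - 1 := sub_pos.2 (Real.one_lt_rpow one_lt_two hε)
  set K : ℝ := max 1 ((2 : ℝ) ^ ε - 1)⁻¹
  have hK : 1 ≤ K := le_max_left _ _
  have h_small {p : ℕ} (hp : 2 ≤ p) : 1 ≤ K * ((p : ℝ) ^ ε - 1) := by
    calc 1 = ((2 : ℝ) ^ ε - 1)⁻¹ * ((2 : ℝ) ^ ε - 1) := (inv_mul_cancel₀ h_two.ne').symm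
      _ ≤ K * ((p : ℝ) ^ ε - 1) := by
        gcongr
        · exact le_max_right _ _
        · exact_mod_cast hp
  have h_large {p : ℕ} (hp : P ≤ p) : 2 ≤ (p : ℝ) ^ ε :=
    (Real.rpow_inv_le_iff_of_pos (by simp) (by simp) hε).1 (hP.trans (by exact_mod_cast hp))
  refine ⟨K ^ P, by positivity, fun m ↦ ?_⟩
  rcases eq_or_ne m 0 with rfl | hm
  · simp [hε.ne']
  calc (#m.divisors : ℝ)
      ≤ (∏ p ∈ m.primeFactors, if p < P then K else 1) * (m : ℝ) ^ ε := by
        refine card_divisors_le_prod_mul_rpow (fun p _ ↦ ?_) (fun p hp ↦ ?_) hm <;> split_ifs with h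
        · exact hK
        · exact le_rfl
        · exact h_small hp.two_le
        · linarith [h_large (not_lt.1 h)]
    _ ≤ K ^ P * (m : ℝ) ^ ε := by gcongr; exact prod_ite_lt_le_pow hK P _

theorem card_divisorsAntidiag (z : ℤ) : #z.divisorsAntidiag = 2 * #z.natAbs.divisors := by
  cases z <;> simp [Int.divisorsAntidiag, two_mul, ← Nat.map_div_right_divisors,
    -disjUnion_eq_union]

end DivisorBound

section Conjugation

variable {ι R : Type*} [Fintype ι] [DecidableEq ι] [CommRing R]

/-- Conjugation of an arbitrary square matrix by an element of the special linear group. -/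
def slConj (g : Matrix.SpecialLinearGroup ι R) (A : Matrix ι ι R) : Matrix ι ι R :=
  (g : Matrix ι ι R) * A * (g⁻¹ : Matrix.SpecialLinearGroup ι R)

theorem slConj_coe (g γ : Matrix.SpecialLinearGroup ι R) :
    slConj g (γ : Matrix ι ι R) = (g * γ * g⁻¹ : Matrix.SpecialLinearGroup ι R) := by
  simp only [slConj, Matrix.SpecialLinearGroup.coe_mul]

theorem slConj_slConj (g h : Matrix.SpecialLinearGroup ι R) (A : Matrix ι ι R) :
    slConj g (slConj h A) = slConj (g * h) A := by
  simp only [slConj, mul_inv_rev, Matrix.SpecialLinearGroup.coe_mul, mul_assoc]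

theorem charpoly_slConj (g : Matrix.SpecialLinearGroup ι R) (A : Matrix ι ι R) :
    (slConj g A).charpoly = A.charpoly := by
  rw [slConj, Matrix.charpoly_mul_comm, ← mul_assoc, ← Matrix.SpecialLinearGroup.coe_mul,
    inv_mul_cancel, Matrix.SpecialLinearGroup.coe_one, one_mul]

theorem trace_slConj (g : Matrix.SpecialLinearGroup ι R) (A : Matrix ι ι R) :
    (slConj g A).trace = A.trace := by
  rw [slConj, Matrix.trace_mul_comm, ← mul_assoc, ← Matrix.SpecialLinearGroup.coe_mul,
    inv_mul_cancel, Matrix.SpecialLinearGroup.coe_one, one_mul]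

theorem discr_slConj (g : Matrix.SpecialLinearGroup ι R) (A : Matrix ι ι R) :
    (slConj g A).discr = A.discr := by
  rw [Matrix.discr, charpoly_slConj, Matrix.discr]

theorem discr_fin_two_eq_sq_add (A : Matrix (Fin 2) (Fin 2) R) :
    A.discr = (A 1 1 - A 0 0) ^ 2 + 4 * (A 0 1 * A 1 0) := by
  rw [Matrix.discr_fin_two, Matrix.trace_fin_two, Matrix.det_fin_two]
  ring

theorem slConj_T_zpow (k : ℤ) (A : Matrix (Fin 2) (Fin 2) ℤ) :
    slConj (T ^ k) A = !![A 0 0 + k * A 1 0, A 0 1 + k * (A 1 1 - A 0 0) - k ^ 2 * A 1 0;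
      A 1 0, A 1 1 - k * A 1 0] := by
  rw [slConj, ← zpow_neg, coe_T_zpow, coe_T_zpow, A.eta_fin_two]
  ext i j
  fin_cases i <;> fin_cases j <;> simp <;> ring

theorem slConj_S (A : Matrix (Fin 2) (Fin 2) ℤ) :
    slConj S A = !![A 1 1, -A 1 0; -A 0 1, A 0 0] := by
  rw [slConj, S_inv, Matrix.SpecialLinearGroup.coe_neg, coe_S, A.eta_fin_two]
  simp

end Conjugation

section Reduction

/-- An integral matrix is Gauss reduced if its fixed form
`A₁₀ x² + (A₁₁ - A₀₀) x y - A₀₁ y²` satisfies Gauss's inequalities. Absolute values are taken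
throughout, so definite and indefinite forms are covered at once. -/
def IsGaussReduced (A : Matrix (Fin 2) (Fin 2) ℤ) : Prop :=
  |A 1 1 - A 0 0| ≤ |A 1 0| ∧ |A 1 0| ≤ |A 0 1|

theorem exists_two_mul_abs_sub_mul_le (t : ℤ) {m : ℤ} (hm : m ≠ 0) :
    ∃ k : ℤ, 2 * |t - k * m| ≤ |m| := by
  refine ⟨round (t / m : ℚ), ?_⟩
  have hm' : (m : ℚ) ≠ 0 := by exact_mod_cast hm
  have h : 2 * |(t : ℚ) - round (t / m : ℚ) * m| ≤ |(m : ℚ)| :=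
    calc 2 * |(t : ℚ) - round (t / m : ℚ) * m|
        = 2 * |(t / m : ℚ) - round (t / m : ℚ)| * |(m : ℚ)| := by
          rw [mul_assoc, ← abs_mul, sub_mul, div_mul_cancel₀ _ hm']
      _ ≤ 2 * (1 / 2) * |(m : ℚ)| := by gcongr; exact abs_sub_round _
      _ = |(m : ℚ)| := by ring
  exact_mod_cast h

theorem exists_slConj_T_zpow_abs_sub_le {A : Matrix (Fin 2) (Fin 2) ℤ} (hA : A 1 0 ≠ 0) :
    ∃ k : ℤ, |slConj (T ^ k) A 1 1 - slConj (T ^ k) A 0 0| ≤ |slConj (T ^ k) A 1 0| := by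
  obtain ⟨k, hk⟩ := exists_two_mul_abs_sub_mul_le (A 1 1 - A 0 0) (mul_ne_zero two_ne_zero hA)
  refine ⟨k, ?_⟩
  rw [abs_mul, abs_two] at hk
  rw [slConj_T_zpow]
  calc |A 1 1 - k * A 1 0 - (A 0 0 + k * A 1 0)| = |A 1 1 - A 0 0 - k * (2 * A 1 0)| := by
        congr 1; ring
    _ ≤ |A 1 0| := le_of_mul_le_mul_left hk two_pos

theorem exists_isGaussReduced_slConj {A : Matrix (Fin 2) (Fin 2) ℤ} (hA : ¬IsSquare A.discr) :
    ∃ g : SL(2, ℤ), IsGaussReduced (slConj g A) := by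
  obtain ⟨g, -, hg⟩ := exists_minimalFor_of_wellFoundedLT (fun _ : SL(2, ℤ) ↦ True)
    (fun g ↦ (slConj g A 1 0).natAbs) ⟨1, trivial⟩
  have h_min (h : SL(2, ℤ)) : |slConj g A 1 0| ≤ |slConj h A 1 0| := by
    simpa only [Int.abs_eq_natAbs, Nat.cast_le] using (le_total _ _).elim id (hg (j := h) trivial)
  have h_ne : slConj g A 1 0 ≠ 0 := fun h₀ ↦ hA <| by
    rw [← discr_slConj g, discr_fin_two_eq_sq_add, h₀, mul_zero, mul_zero, add_zero]
    exact IsSquare.sq _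
  obtain ⟨k, hk⟩ := exists_slConj_T_zpow_abs_sub_le h_ne
  rw [slConj_slConj] at hk
  refine ⟨T ^ k * g, hk, ?_⟩
  calc |slConj (T ^ k * g) A 1 0| = |slConj g A 1 0| := by
        rw [← slConj_slConj, slConj_T_zpow]; rfl
    _ ≤ |slConj (S * (T ^ k * g)) A 1 0| := h_min _
    _ = |slConj (T ^ k * g) A 0 1| := by
        rw [← slConj_slConj, slConj_S]; exact abs_neg _

end Reduction

section Counting

theorem IsGaussReduced.sq_sub_le_abs_discr {A : Matrix (Fin 2) (Fin 2) ℤ} (hA : IsGaussReduced A) :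
    (A 1 1 - A 0 0) ^ 2 ≤ |A.discr| := by
  have h_sq : (A 1 1 - A 0 0) ^ 2 ≤ |A 0 1 * A 1 0| := by
    rw [← sq_abs, sq, abs_mul]
    exact mul_le_mul (hA.1.trans hA.2) hA.1 (abs_nonneg _) (abs_nonneg _)
  have h_discr := discr_fin_two_eq_sq_add A
  grind

/-- The Gauss reduced integral matrices of trace `n` and discriminant `D`. -/
def reducedMatrices (n D : ℤ) : Set (Matrix (Fin 2) (Fin 2) ℤ) :=
  {A | A.trace = n ∧ A.discr = D ∧ IsGaussReduced A}

/-- The coefficients of the fixed form of `A`, up to sign. The middle one comes first, because it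
indexes the finite sets of pairs of outer coefficients in `reducedCoeffs`. -/
def formCoeffs (A : Matrix (Fin 2) (Fin 2) ℤ) : Σ _ : ℤ, ℤ × ℤ :=
  ⟨A 1 1 - A 0 0, A 0 1, A 1 0⟩

/-- A finite set containing `formCoeffs A` for all Gauss reduced `A` of nonsquare discriminant `D`.
For `t² ≢ D` modulo `4` the rounded quotient `(D - t²) / 4` contributes superfluous triples. -/
noncomputable def reducedCoeffs (D : ℤ) : Finset (Σ _ : ℤ, ℤ × ℤ) :=
  (Icc (-(D.natAbs.sqrt : ℤ)) D.natAbs.sqrt).sigma fun t ↦ ((D - t ^ 2) / 4).divisorsAntidiag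

theorem mem_Icc_sqrt_natAbs_iff {t D : ℤ} :
    t ∈ Icc (-(D.natAbs.sqrt : ℤ)) D.natAbs.sqrt ↔ t ^ 2 ≤ |D| := by
  rw [mem_Icc, ← abs_le, Int.abs_eq_natAbs, Nat.cast_le, Nat.le_sqrt', Int.abs_eq_natAbs,
    ← Int.natAbs_sq]
  norm_cast

theorem injOn_formCoeffs (n D : ℤ) : Set.InjOn formCoeffs (reducedMatrices n D) := by
  rintro A ⟨hA, -⟩ B ⟨hB, -⟩ h
  simp only [formCoeffs, Sigma.mk.injEq, heq_eq_eq, Prod.mk.injEq] at h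
  rw [Matrix.trace_fin_two] at hA hB
  rw [A.eta_fin_two, B.eta_fin_two, h.2.1, h.2.2, show A 0 0 = B 0 0 by lia,
    show A 1 1 = B 1 1 by lia]

theorem mapsTo_formCoeffs (n : ℤ) {D : ℤ} (hD : ¬IsSquare D) :
    Set.MapsTo formCoeffs (reducedMatrices n D) (reducedCoeffs D) := by
  rintro A ⟨-, rfl, hA⟩
  have h_prod : (A.discr - (A 1 1 - A 0 0) ^ 2) / 4 = A 0 1 * A 1 0 := by
    rw [discr_fin_two_eq_sq_add, add_sub_cancel_left, Int.mul_ediv_cancel_left _ four_ne_zero]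
  have h_ne : A 0 1 * A 1 0 ≠ 0 := fun h₀ ↦ hD <| by
    rw [discr_fin_two_eq_sq_add, h₀, mul_zero, add_zero]
    exact IsSquare.sq _
  rw [mem_coe, reducedCoeffs, mem_sigma, mem_Icc_sqrt_natAbs_iff, Int.mem_divisorsAntidiag]
  exact ⟨hA.sq_sub_le_abs_discr, h_prod.symm, h_prod ▸ h_ne⟩

theorem finite_reducedMatrices (n : ℤ) {D : ℤ} (hD : ¬IsSquare D) :
    (reducedMatrices n D).Finite :=
  .of_injOn (mapsTo_formCoeffs n hD) (injOn_formCoeffs n D) (finite_toSet _)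

theorem ncard_reducedMatrices_le (n : ℤ) {D : ℤ} (hD : ¬IsSquare D) :
    (reducedMatrices n D).ncard ≤ #(reducedCoeffs D) := by
  rw [← Set.ncard_coe_finset]
  exact Set.ncard_le_ncard_of_injOn _ (mapsTo_formCoeffs n hD) (injOn_formCoeffs n D)

theorem card_reducedCoeffs (D : ℤ) : #(reducedCoeffs D) =
    ∑ t ∈ Icc (-(D.natAbs.sqrt : ℤ)) D.natAbs.sqrt, 2 * #((D - t ^ 2) / 4).natAbs.divisors := by
  simp only [reducedCoeffs, card_sigma, card_divisorsAntidiag]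

theorem natAbs_sub_sq_div_four_le {t D : ℤ} (ht : t ^ 2 ≤ |D|) :
    ((D - t ^ 2) / 4).natAbs ≤ D.natAbs := by
  have := sq_nonneg t
  grind

theorem exists_card_reducedCoeffs_le {ε : ℝ} (hε : 0 < ε) :
    ∃ C > 0, ∀ D : ℤ, D ≠ 0 → (#(reducedCoeffs D) : ℝ) ≤ C * |(D : ℝ)| ^ (1 / 2 + ε) := by
  obtain ⟨C, hC, h_div⟩ := exists_card_divisors_le_mul_rpow hε
  refine ⟨6 * C, by positivity, fun D hD ↦ ?_⟩
  set s := D.natAbs.sqrt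
  have h_term (t : ℤ) (ht : t ∈ Icc (-(s : ℤ)) s) :
      (2 * #((D - t ^ 2) / 4).natAbs.divisors : ℝ) ≤ 2 * (C * |(D : ℝ)| ^ ε) := by
    rw [← Int.cast_abs, ← Nat.cast_natAbs]
    refine mul_le_mul_of_nonneg_left ((h_div _).trans ?_) two_pos.le
    gcongr
    exact natAbs_sub_sq_div_four_le (mem_Icc_sqrt_natAbs_iff.1 ht)
  have h_card : (#(Icc (-(s : ℤ)) s) : ℝ) ≤ 3 * |(D : ℝ)| ^ (1 / 2 : ℝ) := by
    have hs_pos : 1 ≤ s := Nat.sqrt_pos.2 (Int.natAbs_pos.2 hD)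
    calc (#(Icc (-(s : ℤ)) s) : ℝ) ≤ 3 * s := by
          exact_mod_cast (by rw [Int.card_Icc]; lia : #(Icc (-(s : ℤ)) s) ≤ 3 * s)
      _ ≤ 3 * √|(D : ℝ)| := by
          rw [← Int.cast_abs, ← Nat.cast_natAbs]
          gcongr
          exact Real.nat_sqrt_le_real_sqrt
      _ = 3 * |(D : ℝ)| ^ (1 / 2 : ℝ) := by rw [Real.sqrt_eq_rpow]
  calc (#(reducedCoeffs D) : ℝ)
      = ∑ t ∈ Icc (-(s : ℤ)) s, (2 * #((D - t ^ 2) / 4).natAbs.divisors : ℝ) := by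
        rw [card_reducedCoeffs]; push_cast; rfl
    _ ≤ #(Icc (-(s : ℤ)) s) * (2 * (C * |(D : ℝ)| ^ ε)) := by
        rw [← nsmul_eq_mul]; exact sum_le_card_nsmul _ _ _ h_term
    _ ≤ 3 * |(D : ℝ)| ^ (1 / 2 : ℝ) * (2 * (C * |(D : ℝ)| ^ ε)) := by gcongr
    _ = 6 * C * |(D : ℝ)| ^ (1 / 2 + ε) := by
        rw [Real.rpow_add (by positivity)]; ring

end Counting

section ConjClasses

theorem not_isSquare_sq_sub_four {n : ℤ} (hn : n ^ 2 ≠ 4) : ¬IsSquare (n ^ 2 - 4) := by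
  rintro ⟨m, hm⟩
  rcases lt_or_gt_of_ne hn with h_lt | h_gt
  · linarith [mul_self_nonneg m]
  · have h_two : 2 < |n| := by simpa using sq_lt_sq.1 (by linarith : (2 : ℤ) ^ 2 < n ^ 2)
    have h_abs : |m| < |n| := sq_lt_sq.1 (by linarith)
    nlinarith [sq_abs n, sq_abs m, abs_nonneg m]

/-- The elements of `SL₂(ℤ)` of trace `n` that are Gauss reduced. -/
def reducedElements (n : ℤ) : Set SL(2, ℤ) :=
  {γ | (γ : Matrix (Fin 2) (Fin 2) ℤ) ∈ reducedMatrices n (n ^ 2 - 4)}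

theorem conjClasses_trace_subset_image_mk {n : ℤ} (hn : n ^ 2 ≠ 4) :
    {c : ConjClasses SL(2, ℤ) | ∃ γ ∈ c.carrier, Matrix.trace γ.1 = n} ⊆
      ConjClasses.mk '' reducedElements n := by
  rintro c ⟨γ, hγ, rfl⟩
  have h_discr : γ.1.discr = γ.1.trace ^ 2 - 4 := by rw [Matrix.discr_fin_two, γ.2, mul_one]
  obtain ⟨g, hg⟩ := exists_isGaussReduced_slConj (h_discr ▸ not_isSquare_sq_sub_four hn)
  refine ⟨g * γ * g⁻¹, ?_, ?_⟩
  · rw [reducedElements, Set.mem_ofPred_eq, ← slConj_coe]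
    exact ⟨trace_slConj g _, (discr_slConj g _).trans h_discr, hg⟩
  · rw [← ConjClasses.mem_carrier_iff_mk_eq.1 hγ, ConjClasses.mk_eq_mk_iff_isConj, isConj_comm]
    exact isConj_iff.2 ⟨g, rfl⟩

theorem conjClasses_trace_bound_general {ε : ℝ} (hε : 0 < ε) :
    ∃ C : ℝ, 0 < C ∧ ∀ n : ℤ, n ^ 2 ≠ 4 →
      {c : ConjClasses SL(2, ℤ) | ∃ γ ∈ c.carrier, Matrix.trace γ.1 = n}.Finite ∧
      ({c : ConjClasses SL(2, ℤ) | ∃ γ ∈ c.carrier, Matrix.trace γ.1 = n}.ncard : ℝ) ≤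
        C * |(n : ℝ) ^ 2 - 4| ^ (1 / 2 + ε) := by
  obtain ⟨C, hC, h_coeffs⟩ := exists_card_reducedCoeffs_le hε
  refine ⟨C, hC, fun n hn ↦ ?_⟩
  have h_subset := conjClasses_trace_subset_image_mk hn
  have h_fin := finite_reducedMatrices n (not_isSquare_sq_sub_four hn)
  have h_fin' : (reducedElements n).Finite := h_fin.preimage Subtype.val_injective.injOn
  have h_ncard : {c : ConjClasses SL(2, ℤ) | ∃ γ ∈ c.carrier, Matrix.trace γ.1 = n}.ncard ≤
      #(reducedCoeffs (n ^ 2 - 4)) :=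
    calc _ ≤ (ConjClasses.mk '' reducedElements n).ncard :=
          Set.ncard_le_ncard h_subset (h_fin'.image _)
      _ ≤ (reducedElements n).ncard := Set.ncard_image_le h_fin'
      _ ≤ (reducedMatrices n (n ^ 2 - 4)).ncard :=
          Set.ncard_le_ncard_of_injOn _ (fun _ h ↦ h) Subtype.val_injective.injOn h_fin
      _ ≤ #(reducedCoeffs (n ^ 2 - 4)) :=
          ncard_reducedMatrices_le n (not_isSquare_sq_sub_four hn)
  refine ⟨(h_fin'.image _).subset h_subset, (Nat.cast_le.2 h_ncard).trans ?_⟩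
  exact_mod_cast h_coeffs (n ^ 2 - 4) (sub_ne_zero.2 hn)

theorem abs_sq_sub_four_rpow_le {x η : ℝ} (hx : 2 ≤ x) (hη : 0 ≤ η) :
    |x ^ 2 - 4| ^ (1 / 2 + η / 2) ≤ x ^ (1 + η) := by
  calc |x ^ 2 - 4| ^ (1 / 2 + η / 2) ≤ (x ^ 2) ^ (1 / 2 + η / 2) := by
        gcongr
        rw [abs_le]
        constructor <;> nlinarith
    _ = x ^ (1 + η) := by
        rw [← Real.rpow_natCast_mul (by linarith)]
        congr 1
        push_cast
        ring

end ConjClasses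

/-- For every `η > 0` there is `C > 0` such that for every integer `n ≥ 3`, the set of
conjugacy classes of `SL₂(ℤ)` whose elements have trace `n` is finite of cardinality
at most `C·n^(1+η)`. -/
theorem conjClasses_trace_bound (η : ℝ) (hη : 0 < η) :
    ∃ C : ℝ, 0 < C ∧ ∀ n : ℤ, 3 ≤ n →
      {c : ConjClasses (Matrix.SpecialLinearGroup (Fin 2) ℤ) |
          ∃ γ ∈ c.carrier, Matrix.trace (γ : Matrix.SpecialLinearGroup (Fin 2) ℤ).1 = n}.Finite ∧
      (({c : ConjClasses (Matrix.SpecialLinearGroup (Fin 2) ℤ) |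
          ∃ γ ∈ c.carrier, Matrix.trace (γ : Matrix.SpecialLinearGroup (Fin 2) ℤ).1 = n}.ncard : ℝ))
        ≤ C * (n : ℝ) ^ ((1 : ℝ) + η) := by
  obtain ⟨C, hC, h⟩ := conjClasses_trace_bound_general (half_pos hη)
  refine ⟨C, hC, fun n hn ↦ (h n (by nlinarith)).imp_right fun h_le ↦ h_le.trans ?_⟩
  gcongr
  exact abs_sq_sub_four_rpow_le (by exact_mod_cast (by lia : 2 ≤ n)) hη.le
end
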